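/- (Stein identity for stable laws with α ∈ [1,2).) Let α ∈ [1,2), m₁, m₂ ∈ [0,∞) with m₁ + m₂ > 0, β ∈ ℝ, and let μ be a Borel probability measure on ℝ whose characteristic function satisfies ∫_ℝ e^{itx} dμ(x) = ψ_α(t) for all t ∈ ℝ. Then for every real-valued Schwartz function g on ℝ, ∫_ℝ (x - Γ_α) g(x) dμ(x) = ∫_ℝ ∫_ℝ u (g(x+u) - g(x)·1_{|u|≤1}) ν_α(du) dμ(x), all integrals being absolutely convergent. -/

import Mathlib

open MeasureTheory

/-- The α-stable Lévy measure on ℝ with density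
`u ↦ m₁ u^(-α-1) 1_{(0,∞)}(u) + m₂ |u|^(-α-1) 1_{(-∞,0)}(u)` w.r.t. Lebesgue measure. -/
noncomputable def nuStable (α m₁ m₂ : ℝ) : Measure ℝ :=
  (volume : Measure ℝ).withDensity fun u =>
    ENNReal.ofReal (if 0 < u then m₁ * u ^ (-α - 1) else if u < 0 then m₂ * |u| ^ (-α - 1) else 0)

/-- Location parameter for `α ∈ [1,2)`:
`Γ_α = β + 2(m₁-m₂)∫₀^1 u^{2-α}(1+u²)^{-1} du - (m₁-m₂)∫₀^∞ min(1,u²) u^{-α}(1+u²)^{-1} du`. -/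
noncomputable def Gamma12 (α m₁ m₂ β : ℝ) : ℝ :=
  β + 2 * (m₁ - m₂) * (∫ u in Set.Ioc (0 : ℝ) 1, u ^ (2 - α) / (1 + u ^ 2)) -
    (m₁ - m₂) * ∫ u in Set.Ioi (0 : ℝ), min 1 (u ^ 2) * u ^ (-α) / (1 + u ^ 2)

/-- Characteristic function of the `α`-stable law, `α ∈ [1,2)`:
`ψ_α(t) = exp(itΓ_α + ∫_ℝ (e^{itu} - 1 - itu·1_{|u|≤1}) ν_α(du))`. -/
noncomputable def psi12 (α m₁ m₂ β : ℝ) (t : ℝ) : ℂ :=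
  Complex.exp (Complex.I * t * (Gamma12 α m₁ m₂ β) +
    ∫ u : ℝ, (Complex.exp (Complex.I * t * u) - 1 -
      (if |u| ≤ 1 then Complex.I * t * u else 0)) ∂(nuStable α m₁ m₂))

/-!
Let `Φ` be the Lévy–Khintchine exponent of `μ` with drift `c` and Lévy measure `ν`. If `ν` has a
finite second moment, then `Φ` is differentiable and `∫ (f e^Φ)' = 0` for every Schwartz function
`f`; for `f = 𝓕 g` this is, by Fubini, the Stein identity for `g`. A stable `ν` has infinite second
moment, so its jumps of size greater than `r` are removed. With `ρ` the restriction of `ν` to these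
jumps, the characteristic function of `μ` is that of the truncated law times `e^{η_ρ}`, where
`η_ρ t = ∫ (e^{itu} - 1) ρ(du)`. Multiplication by `e^{-η_ρ} - 1` on the Fourier side increases sup
norms at most by the factor `e^{2ρ(ℝ)} - 1`, which tends to `0` as `r → ∞`, while the truncated
Stein operators applied to `g` stay uniformly bounded and converge pointwise.
-/

open Filter Topology Set Complex
open scoped FourierTransform SchwartzMap NNReal ENNReal

section Multipliers

variable {P : ℝ → ℂ} {b : ℝ} {ρ : Measure ℝ}

lemma charFun_real_eq_integral_cexp (μ : Measure ℝ) (t : ℝ) :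
    charFun μ t = ∫ x : ℝ, cexp (I * t * x) ∂μ := by
  simp_rw [charFun_apply_real, mul_comm I, mul_right_comm]

lemma norm_cexp_I_mul_mul (t u : ℝ) : ‖cexp (I * t * u)‖ = 1 := by
  rw [mul_assoc, ← ofReal_mul, norm_exp_I_mul_ofReal]

lemma fourierInv_real_eq_integral_cexp (P : ℝ → ℂ) (x : ℝ) :
    𝓕⁻ P x = ∫ t : ℝ, cexp (I * (2 * Real.pi * t : ℝ) * x) * P t := by
  rw [Real.fourierInv_eq']
  congr with t
  simp only [RCLike.inner_apply, conj_trivial, smul_eq_mul]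
  push_cast
  ring_nf

lemma integrable_cexp_I_mul_mul (hP : Integrable P) (x : ℝ) :
    Integrable fun t : ℝ ↦ cexp (I * (2 * Real.pi * t : ℝ) * x) * P t :=
  hP.bdd_mul (c := 1) (by fun_prop) (.of_forall fun t ↦ (norm_cexp_I_mul_mul _ x).le)

lemma fourierInv_fun_add {Q : ℝ → ℂ} (hP : Integrable P) (hQ : Integrable Q) (x : ℝ) :
    𝓕⁻ (fun t ↦ P t + Q t) x = 𝓕⁻ P x + 𝓕⁻ Q x := by
  simp_rw [fourierInv_real_eq_integral_cexp, mul_add]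
  exact integral_add (integrable_cexp_I_mul_mul hP x) (integrable_cexp_I_mul_mul hQ x)

lemma fourierInv_fun_sub {Q : ℝ → ℂ} (hP : Integrable P) (hQ : Integrable Q) (x : ℝ) :
    𝓕⁻ (fun t ↦ P t - Q t) x = 𝓕⁻ P x - 𝓕⁻ Q x := by
  simp_rw [fourierInv_real_eq_integral_cexp, mul_sub]
  exact integral_sub (integrable_cexp_I_mul_mul hP x) (integrable_cexp_I_mul_mul hQ x)

lemma fourierInv_const_mul (c : ℂ) (x : ℝ) :
    𝓕⁻ (fun t ↦ c * P t) x = c * 𝓕⁻ P x := by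
  simp_rw [fourierInv_real_eq_integral_cexp, mul_left_comm _ c, integral_const_mul]

/-- The exponent `t ↦ ∫ (e^{itu} - 1) ρ(du)` of the compound Poisson law with jump measure `ρ`. -/
noncomputable def poissonExponent (ρ : Measure ℝ) (t : ℝ) : ℂ := charFun ρ t - ρ.real univ

lemma norm_poissonExponent_le (t : ℝ) : ‖poissonExponent ρ t‖ ≤ 2 * ρ.real univ := by
  calc ‖poissonExponent ρ t‖ ≤ ‖charFun ρ t‖ + ‖(ρ.real univ : ℂ)‖ := norm_sub_le _ _
    _ ≤ ρ.real univ + ρ.real univ := by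
      gcongr
      · exact norm_charFun_le t
      · rw [norm_real, Real.norm_of_nonneg measureReal_nonneg]
    _ = 2 * ρ.real univ := by ring

variable [IsFiniteMeasure ρ]

lemma integrable_charFun_mul (hP : Integrable P) :
    Integrable fun t ↦ charFun ρ (2 * Real.pi * t) * P t :=
  hP.bdd_mul (by fun_prop) (.of_forall fun t ↦ norm_charFun_le _)

lemma integral_charFun_mul_eq_integral_fourierInv (hP : Integrable P) :
    ∫ t : ℝ, charFun ρ (2 * Real.pi * t) * P t = ∫ x, 𝓕⁻ P x ∂ρ := by
  simp_rw [fourierInv_real_eq_integral_cexp, charFun_real_eq_integral_cexp, ← integral_mul_const]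
  refine integral_integral_swap ?_
  refine (hP.comp_fst ρ).bdd_mul (c := 1) (by fun_prop) (.of_forall fun p ↦ ?_)
  exact (norm_cexp_I_mul_mul _ _).le

lemma fourierInv_charFun_mul (hP : Integrable P) (x : ℝ) :
    𝓕⁻ (fun t ↦ charFun ρ (2 * Real.pi * t) * P t) x = ∫ u, 𝓕⁻ P (x + u) ∂ρ := by
  rw [fourierInv_real_eq_integral_cexp]
  simp_rw [mul_left_comm _ (charFun ρ _)]
  rw [integral_charFun_mul_eq_integral_fourierInv (integrable_cexp_I_mul_mul hP x)]
  simp_rw [fourierInv_real_eq_integral_cexp]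
  congr with u
  congr with t
  rw [← mul_assoc, ← Complex.exp_add, ofReal_add, mul_add, add_comm]

@[fun_prop]
lemma measurable_poissonExponent : Measurable (poissonExponent ρ) :=
  measurable_charFun.sub_const _

lemma integrable_poissonExponent_pow_mul (hP : Integrable P) (k : ℕ) :
    Integrable fun t ↦ poissonExponent ρ (2 * Real.pi * t) ^ k * P t := by
  refine hP.bdd_mul (c := (2 * ρ.real univ) ^ k)
    (by fun_prop : Measurable _).aestronglyMeasurable (.of_forall fun t ↦ ?_)
  rw [norm_pow]
  gcongr
  exact norm_poissonExponent_le _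

lemma integrable_cexp_neg_poissonExponent_sub_one_mul (hP : Integrable P) :
    Integrable fun t ↦ (cexp (-poissonExponent ρ (2 * Real.pi * t)) - 1) * P t := by
  refine hP.bdd_mul (c := Real.exp (2 * ρ.real univ) + 1)
    (by fun_prop : Measurable _).aestronglyMeasurable
    (.of_forall fun t ↦ (norm_sub_le _ _).trans ?_)
  rw [norm_one]
  gcongr
  refine (norm_exp_le_exp_norm _).trans (Real.exp_le_exp.2 ?_)
  rw [norm_neg]
  exact norm_poissonExponent_le _

lemma norm_fourierInv_poissonExponent_mul_le (hP : Integrable P) (hb : ∀ x, ‖𝓕⁻ P x‖ ≤ b)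
    (x : ℝ) :
    ‖𝓕⁻ (fun t ↦ poissonExponent ρ (2 * Real.pi * t) * P t) x‖ ≤ 2 * ρ.real univ * b := by
  simp_rw [poissonExponent, sub_mul]
  rw [fourierInv_fun_sub (integrable_charFun_mul hP) (hP.const_mul _), fourierInv_charFun_mul hP,
    fourierInv_const_mul]
  calc ‖(∫ u, 𝓕⁻ P (x + u) ∂ρ) - ρ.real univ * 𝓕⁻ P x‖
      ≤ ‖∫ u, 𝓕⁻ P (x + u) ∂ρ‖ + ‖(ρ.real univ : ℂ) * 𝓕⁻ P x‖ := norm_sub_le _ _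
    _ ≤ b * ρ.real univ + ρ.real univ * b := by
      gcongr
      · exact norm_integral_le_of_norm_le_const (.of_forall fun u ↦ hb (x + u))
      · rw [norm_mul, norm_real, Real.norm_of_nonneg measureReal_nonneg]
        gcongr
        exact hb x
    _ = 2 * ρ.real univ * b := by ring

lemma norm_fourierInv_poissonExponent_pow_mul_le (hP : Integrable P) (hb : ∀ x, ‖𝓕⁻ P x‖ ≤ b)
    (k : ℕ) (x : ℝ) :
    ‖𝓕⁻ (fun t ↦ poissonExponent ρ (2 * Real.pi * t) ^ k * P t) x‖
      ≤ (2 * ρ.real univ) ^ k * b := by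
  induction k generalizing x with
  | zero => simpa using hb x
  | succ k ih =>
    simp_rw [pow_succ', mul_assoc (poissonExponent _ _)]
    refine (norm_fourierInv_poissonExponent_mul_le
      (integrable_poissonExponent_pow_mul hP k) ih x).trans_eq (by ring)

lemma hasSum_cexp_sub_one (z : ℂ) :
    HasSum (fun k : ℕ ↦ z ^ (k + 1) / (k + 1).factorial) (cexp z - 1) := by
  have h := NormedSpace.expSeries_div_hasSum_exp z
  rw [← Complex.exp_eq_exp_ℂ] at h
  simpa using (hasSum_nat_add_iff' 1).2 h

lemma hasSum_rexp_sub_one (x : ℝ) :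
    HasSum (fun k : ℕ ↦ x ^ (k + 1) / (k + 1).factorial) (Real.exp x - 1) := by
  have h := NormedSpace.expSeries_div_hasSum_exp x
  rw [← Real.exp_eq_exp_ℝ] at h
  simpa using (hasSum_nat_add_iff' 1).2 h

-- `exp (-η_ρ) - 1` is the Fourier transform of a signed measure of total variation at most
-- `exp (2 ρ(ℝ)) - 1`; the power series exhibits the bound without constructing that measure.
lemma norm_fourierInv_exp_neg_poissonExponent_sub_one_mul_le
    (hP : Integrable P) (hb : ∀ x, ‖𝓕⁻ P x‖ ≤ b) (x : ℝ) :
    ‖𝓕⁻ (fun t ↦ (cexp (-poissonExponent ρ (2 * Real.pi * t)) - 1) * P t) x‖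
      ≤ (Real.exp (2 * ρ.real univ) - 1) * b := by
  set η : ℝ → ℂ := fun t ↦ poissonExponent ρ (2 * Real.pi * t)
  set e : ℝ → ℂ := fun t ↦ cexp (I * (2 * Real.pi * t : ℝ) * x)
  set a : ℕ → ℂ := fun k ↦ (-1) ^ (k + 1) / (k + 1).factorial
  have norm_a (k : ℕ) : ‖a k‖ = ((k + 1).factorial : ℝ)⁻¹ := by simp [a]
  have integrable_term (k : ℕ) : Integrable fun t ↦ a k * (e t * (η t ^ (k + 1) * P t)) :=
    (integrable_cexp_I_mul_mul (integrable_poissonExponent_pow_mul hP (k + 1)) x).const_mul (a k)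
  have norm_term_le (k : ℕ) : ∫ t, ‖a k * (e t * (η t ^ (k + 1) * P t))‖
      ≤ (2 * ρ.real univ) ^ (k + 1) / (k + 1).factorial * ∫ t, ‖P t‖ := by
    rw [← integral_const_mul]
    refine integral_mono (integrable_term k).norm (hP.norm.const_mul _) fun t ↦ ?_
    simp only [norm_mul, norm_a, e, norm_cexp_I_mul_mul, norm_pow, one_mul]
    rw [div_eq_inv_mul, mul_assoc]
    gcongr
    exact norm_poissonExponent_le _
  have summable_term : Summable fun k ↦ ∫ t, ‖a k * (e t * (η t ^ (k + 1) * P t))‖ :=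
    .of_nonneg_of_le (fun k ↦ integral_nonneg fun t ↦ norm_nonneg _) norm_term_le
      ((hasSum_rexp_sub_one _).summable.mul_right _)
  have tsum_term (t : ℝ) :
      ∑' k, a k * (e t * (η t ^ (k + 1) * P t)) = e t * ((cexp (-η t) - 1) * P t) := by
    rw [← ((hasSum_cexp_sub_one (-η t)).mul_right (P t) |>.mul_left (e t)).tsum_eq]
    congr with k
    rw [neg_pow]
    ring
  have hsum := hasSum_integral_of_summable_integral_norm integrable_term summable_term
  simp_rw [tsum_term, integral_const_mul] at hsum
  rw [fourierInv_real_eq_integral_cexp]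
  refine hsum.norm_le_of_bounded ((hasSum_rexp_sub_one _).mul_right b) fun k ↦ ?_
  rw [norm_mul, norm_a, div_eq_inv_mul, mul_assoc, ← fourierInv_real_eq_integral_cexp]
  gcongr
  exact norm_fourierInv_poissonExponent_pow_mul_le hP hb (k + 1) x

end Multipliers

section LevyExponent

variable {c : ℝ} {ν : Measure ℝ}

/-- The integrand `e^{itu} - 1 - itu 1_{|u| ≤ 1}` of the Lévy–Khintchine formula. -/
noncomputable def levyKernel (t u : ℝ) : ℂ :=
  cexp (I * t * u) - 1 - if |u| ≤ 1 then I * t * u else 0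

/-- The derivative in `t` of the Lévy–Khintchine integrand `levyKernel t u`. -/
noncomputable def levyKernelDeriv (t u : ℝ) : ℂ :=
  I * u * (cexp (I * t * u) - if |u| ≤ 1 then 1 else 0)

/-- The characteristic exponent of the infinitely divisible law with location `c`, Lévy measure `ν`
and no Gaussian part, with jumps compensated on `|u| ≤ 1`. -/
noncomputable def levyExponent (c : ℝ) (ν : Measure ℝ) (t : ℝ) : ℂ :=
  I * t * c + ∫ u, levyKernel t u ∂ν

/-- The derivative in `t` of `levyExponent c ν`, valid when `ν` has a finite second moment. -/
noncomputable def levyExponentDeriv (c : ℝ) (ν : Measure ℝ) (t : ℝ) : ℂ :=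
  I * c + ∫ u, levyKernelDeriv t u ∂ν

lemma measurable_levyKernel (t : ℝ) : Measurable (levyKernel t) :=
  (by fun_prop : Measurable fun u : ℝ ↦ cexp (I * t * u) - 1).sub <|
    Measurable.ite (measurableSet_le (by fun_prop) measurable_const) (by fun_prop) measurable_const

lemma measurable_uncurry_levyKernelDeriv : Measurable (Function.uncurry levyKernelDeriv) :=
  (by fun_prop : Measurable fun p : ℝ × ℝ ↦ I * p.2).mul <|
    (by fun_prop : Measurable fun p : ℝ × ℝ ↦ cexp (I * p.1 * p.2)).sub <|
      Measurable.ite (measurableSet_le (by fun_prop) measurable_const) measurable_const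
        measurable_const

lemma norm_cexp_I_mul_sub_one_sub_le (v : ℝ) : ‖cexp (I * v) - 1 - I * v‖ ≤ 3 * v ^ 2 := by
  have norm_I_mul : ‖I * v‖ = |v| := by simp
  rcases le_total |v| 1 with hv | hv
  · refine (norm_exp_sub_one_sub_id_le (norm_I_mul.trans_le hv)).trans ?_
    rw [norm_I_mul, sq_abs]
    linarith [sq_nonneg v]
  · calc ‖cexp (I * v) - 1 - I * v‖ ≤ ‖cexp (I * v) - 1‖ + ‖I * v‖ := norm_sub_le _ _
      _ ≤ 2 + |v| := by
        gcongr
        · refine (norm_sub_le _ _).trans ?_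
          rw [norm_exp_I_mul_ofReal, norm_one]
          norm_num
        · exact norm_I_mul.le
      _ ≤ 3 * v ^ 2 := by nlinarith [sq_abs v]

lemma norm_levyKernel_le (t u : ℝ) : ‖levyKernel t u‖ ≤ 3 * (1 + t ^ 2) * min 1 (u ^ 2) := by
  have hmul : I * t * u = I * (t * u : ℝ) := by push_cast; ring
  rw [levyKernel, hmul]
  split_ifs with hu
  · have hu2 : u ^ 2 ≤ 1 := (sq_le_one_iff_abs_le_one u).2 hu
    rw [min_eq_right hu2]
    refine (norm_cexp_I_mul_sub_one_sub_le _).trans ?_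
    nlinarith [sq_nonneg u]
  · have hu2 : 1 ≤ u ^ 2 := (one_le_sq_iff_one_le_abs u).2 (not_le.1 hu).le
    rw [min_eq_left hu2, sub_zero]
    refine (norm_sub_le _ _).trans ?_
    rw [norm_exp_I_mul_ofReal, norm_one]
    linarith [sq_nonneg t]

lemma norm_levyKernelDeriv_le (t u : ℝ) : ‖levyKernelDeriv t u‖ ≤ (1 + |t|) * u ^ 2 := by
  rw [levyKernelDeriv, norm_mul, norm_mul, norm_I, norm_real, one_mul, Real.norm_eq_abs]
  suffices h : ‖cexp (I * t * u) - if |u| ≤ 1 then 1 else 0‖ ≤ (1 + |t|) * |u| by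
    rw [← sq_abs]
    nlinarith [abs_nonneg u]
  split_ifs with hu
  · have h := Real.norm_exp_I_mul_ofReal_sub_one_le (x := t * u)
    rw [Real.norm_eq_abs, abs_mul, ofReal_mul, ← mul_assoc] at h
    linarith [abs_nonneg u]
  · rw [sub_zero, norm_cexp_I_mul_mul]
    nlinarith [abs_nonneg t]

lemma hasDerivAt_levyKernel (t u : ℝ) :
    HasDerivAt (fun s ↦ levyKernel s u) (levyKernelDeriv t u) t := by
  have hlin : HasDerivAt (fun s : ℝ ↦ I * s * u) (I * u) t := by
    simpa using (ofRealCLM.hasDerivAt.const_mul I).mul_const (u : ℂ)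
  unfold levyKernel levyKernelDeriv
  split_ifs
  · exact ((hlin.cexp.sub_const 1).sub hlin).congr_deriv (by ring)
  · simpa [mul_comm] using hlin.cexp.sub_const 1

lemma integrable_levyKernel (hν : Integrable (fun u ↦ min 1 (u ^ 2)) ν) (t : ℝ) :
    Integrable (levyKernel t) ν :=
  (hν.const_mul _).mono' (measurable_levyKernel t).aestronglyMeasurable
    (.of_forall (norm_levyKernel_le t))

lemma integrable_min_one_sq (hν : Integrable (fun u ↦ u ^ 2) ν) :
    Integrable (fun u ↦ min 1 (u ^ 2)) ν :=
  hν.mono' (by fun_prop) <| .of_forall fun u ↦ by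
    rw [Real.norm_of_nonneg (by positivity)]
    exact min_le_right _ _

lemma norm_cexp_levyExponent_le_one (hν : Integrable (fun u ↦ min 1 (u ^ 2)) ν) (t : ℝ) :
    ‖cexp (levyExponent c ν t)‖ ≤ 1 := by
  have re_levyKernel (u : ℝ) : RCLike.re (levyKernel t u) = Real.cos (t * u) - 1 := by
    rw [levyKernel]
    split_ifs <;> simp [exp_re]
  have re_levyExponent : (levyExponent c ν t).re = ∫ u, (Real.cos (t * u) - 1) ∂ν := by
    rw [levyExponent, add_re, ← RCLike.re_eq_complex_re,
      ← integral_re (integrable_levyKernel hν t), integral_congr_ae (.of_forall re_levyKernel)]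
    simp
  rw [norm_exp, Real.exp_le_one_iff, re_levyExponent]
  exact integral_nonpos fun u ↦ sub_nonpos.2 (Real.cos_le_one _)

lemma hasDerivAt_levyExponent (hν : Integrable (fun u ↦ u ^ 2) ν) (t : ℝ) :
    HasDerivAt (levyExponent c ν) (levyExponentDeriv c ν t) t := by
  have hjump := (hasDerivAt_integral_of_dominated_loc_of_deriv_le (μ := ν)
    (F := levyKernel) (F' := levyKernelDeriv) (bound := fun u ↦ (2 + |t|) * u ^ 2)
    (Metric.ball_mem_nhds t one_pos)
    (.of_forall fun s ↦ (measurable_levyKernel s).aestronglyMeasurable)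
    (integrable_levyKernel (integrable_min_one_sq hν) t)
    measurable_uncurry_levyKernelDeriv.of_uncurry_left.aestronglyMeasurable
    (.of_forall fun u s hs ↦ (norm_levyKernelDeriv_le s u).trans ?_)
    (hν.const_mul _) (.of_forall fun u s _ ↦ hasDerivAt_levyKernel s u)).2
  · have hdrift : HasDerivAt (fun s : ℝ ↦ I * s * c) (I * c) t := by
      simpa using (ofRealCLM.hasDerivAt.const_mul I).mul_const (c : ℂ)
    exact hdrift.add hjump
  · rw [Metric.mem_ball, Real.dist_eq] at hs
    gcongr ?_ * _
    linarith [abs_sub_abs_le_abs_sub s t]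

end LevyExponent

section SteinOperator

variable {E : Type*} [NormedAddCommGroup E] [NormedSpace ℝ E] {c : ℝ} {ν : Measure ℝ}

/-- The integrand `u (g(x + u) - g(x) 1_{|u| ≤ 1})` of the jump part of the Stein operator. -/
noncomputable def steinJump (g : ℝ → E) (x u : ℝ) : E :=
  u • (g (x + u) - if |u| ≤ 1 then g x else 0)

/-- The Stein operator `g ↦ (x - c) g(x) - ∫ u (g(x + u) - g(x) 1_{|u| ≤ 1}) ν(du)` of the
infinitely divisible law with characteristic exponent `levyExponent c ν`. -/
noncomputable def steinOperator (c : ℝ) (ν : Measure ℝ) (g : ℝ → E) (x : ℝ) : E :=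
  (x - c) • g x - ∫ u, steinJump g x u ∂ν

/-- The expression `(f e^Φ)' e^{-Φ}` with `Φ t = levyExponent c ν (2πt)`. Up to the factor `-2πi`
it is the Fourier transform of `steinOperator c ν (𝓕⁻ f)`. -/
noncomputable def steinSymbol (c : ℝ) (ν : Measure ℝ) (f : ℝ → ℂ) (t : ℝ) : ℂ :=
  deriv f t + 2 * Real.pi * (levyExponentDeriv c ν (2 * Real.pi * t) * f t)

lemma integrable_prod_levyKernelDeriv_mul [SFinite ν] (hν : Integrable (fun u ↦ u ^ 2) ν)
    (f : 𝓢(ℝ, ℂ)) :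
    Integrable (fun p : ℝ × ℝ ↦ levyKernelDeriv (2 * Real.pi * p.1) p.2 * f p.1)
      (volume.prod ν) := by
  have hf : Integrable (fun t : ℝ ↦ (1 + 2 * Real.pi * |t|) * ‖f t‖) := by
    have h0 : Integrable fun t : ℝ ↦ ‖f t‖ := f.integrable.norm
    have h1 := (f.integrable_pow_mul (volume : Measure ℝ) 1).const_mul (2 * Real.pi)
    refine (h0.add h1).congr (.of_forall fun t ↦ ?_)
    simp only [Pi.add_apply, Real.norm_eq_abs, pow_one]
    ring
  refine (hf.mul_prod hν).mono' ?_ (.of_forall fun p ↦ ?_)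
  · exact ((measurable_uncurry_levyKernelDeriv.comp
      (by fun_prop : Measurable fun p : ℝ × ℝ ↦ (2 * Real.pi * p.1, p.2))).mul
      (f.continuous.measurable.comp measurable_fst)).aestronglyMeasurable
  · have h := norm_levyKernelDeriv_le (2 * Real.pi * p.1) p.2
    rw [abs_mul, abs_of_pos Real.two_pi_pos] at h
    rw [norm_mul]
    calc _ ≤ (1 + 2 * Real.pi * |p.1|) * p.2 ^ 2 * ‖f p.1‖ := by gcongr
      _ = _ := by ring

lemma integrable_levyExponentDeriv_mul [SFinite ν] (hν : Integrable (fun u ↦ u ^ 2) ν)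
    (f : 𝓢(ℝ, ℂ)) :
    Integrable fun t : ℝ ↦ levyExponentDeriv c ν (2 * Real.pi * t) * f t := by
  simp_rw [levyExponentDeriv, add_mul, ← integral_mul_const]
  exact (f.integrable.const_mul _).add (integrable_prod_levyKernelDeriv_mul hν f).integral_prod_left

lemma integrable_steinSymbol [SFinite ν] (hν : Integrable (fun u ↦ u ^ 2) ν) (f : 𝓢(ℝ, ℂ)) :
    Integrable (steinSymbol c ν f) :=
  (SchwartzMap.derivCLM ℝ ℂ f).integrable.add
    ((integrable_levyExponentDeriv_mul hν f).const_mul (2 * Real.pi))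

lemma integral_steinSymbol_mul_cexp_levyExponent [SFinite ν] (hν : Integrable (fun u ↦ u ^ 2) ν)
    (f : 𝓢(ℝ, ℂ)) :
    ∫ t, steinSymbol c ν f t * cexp (levyExponent c ν (2 * Real.pi * t)) = 0 := by
  set ψ : ℝ → ℂ := fun t ↦ cexp (levyExponent c ν (2 * Real.pi * t))
  have hasDerivAt_ψ (t : ℝ) :
      HasDerivAt ψ (ψ t * ((2 * Real.pi : ℝ) • levyExponentDeriv c ν (2 * Real.pi * t))) t :=
    ((hasDerivAt_levyExponent hν _).scomp t
      (by simpa using (hasDerivAt_id t).const_mul (2 * Real.pi))).cexp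
  have hψ : AEStronglyMeasurable ψ :=
    (continuous_iff_continuousAt.2 fun t ↦ (hasDerivAt_ψ t).continuousAt).aestronglyMeasurable
  have ψ_le_one (t : ℝ) : ‖ψ t‖ ≤ 1 := norm_cexp_levyExponent_le_one (integrable_min_one_sq hν) _
  refine integral_eq_zero_of_hasDerivAt_of_integrable (f := fun t ↦ f t * ψ t) (fun t ↦ ?_)
    ((integrable_steinSymbol hν f).mul_bdd hψ (.of_forall ψ_le_one))
    (f.integrable.mul_bdd hψ (.of_forall ψ_le_one))
  refine ((f.differentiable t).hasDerivAt.mul (hasDerivAt_ψ t)).congr_deriv ?_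
  rw [steinSymbol, real_smul]
  push_cast
  ring

lemma fourierInv_deriv (f : 𝓢(ℝ, ℂ)) (x : ℝ) :
    𝓕⁻ (deriv f) x = -(2 * Real.pi * I) * (x * 𝓕⁻ (f : ℝ → ℂ) x) := by
  have hderiv : deriv f = LineDeriv.lineDerivOp (1 : ℝ) f :=
    funext fun t ↦ fderiv_apply_one_eq_deriv.symm
  have h := DFunLike.congr_fun (SchwartzMap.fourierInv_lineDerivOp_eq f (1 : ℝ)) x
  rw [smul_apply, SchwartzMap.smulLeftCLM_apply_apply (by fun_prop),
    SchwartzMap.fourierInv_coe, SchwartzMap.fourierInv_coe] at h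
  simpa [hderiv] using h

lemma fourierInv_levyKernelDeriv_mul {P : ℝ → ℂ} (hP : Integrable P) (u x : ℝ) :
    𝓕⁻ (fun t ↦ levyKernelDeriv (2 * Real.pi * t) u * P t) x = I * steinJump (𝓕⁻ P) x u := by
  have hshift : 𝓕⁻ (fun t ↦ cexp (I * (2 * Real.pi * t : ℝ) * u) * P t) x = 𝓕⁻ P (x + u) := by
    simp_rw [fourierInv_real_eq_integral_cexp, ← mul_assoc, ← Complex.exp_add, ← mul_add,
      ofReal_add]
  simp_rw [levyKernelDeriv, steinJump, mul_assoc (I * (u : ℂ)), sub_mul, fourierInv_const_mul]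
  rw [fourierInv_fun_sub (integrable_cexp_I_mul_mul hP u) (hP.const_mul _), hshift,
    fourierInv_const_mul, ite_mul, one_mul, zero_mul, real_smul, mul_assoc]

lemma fourierInv_levyExponentDeriv_mul [SFinite ν] (hν : Integrable (fun u ↦ u ^ 2) ν)
    (f : 𝓢(ℝ, ℂ)) (x : ℝ) :
    𝓕⁻ (fun t ↦ levyExponentDeriv c ν (2 * Real.pi * t) * f t) x
      = I * (c * 𝓕⁻ (f : ℝ → ℂ) x + ∫ u, steinJump (𝓕⁻ (f : ℝ → ℂ)) x u ∂ν) := by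
  have hjump := integrable_prod_levyKernelDeriv_mul hν f
  have fourierInv_jump :
      𝓕⁻ (fun t ↦ ∫ u, levyKernelDeriv (2 * Real.pi * t) u * f t ∂ν) x
        = I * ∫ u, steinJump (𝓕⁻ (f : ℝ → ℂ)) x u ∂ν := by
    simp_rw [← integral_const_mul I, ← fourierInv_levyKernelDeriv_mul f.integrable,
      fourierInv_real_eq_integral_cexp, ← integral_const_mul]
    exact integral_integral_swap <| hjump.bdd_mul (c := 1) (by fun_prop)
      (.of_forall fun p ↦ (norm_cexp_I_mul_mul _ x).le)
  simp_rw [levyExponentDeriv, add_mul, ← integral_mul_const]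
  rw [fourierInv_fun_add (f.integrable.const_mul _) hjump.integral_prod_left, fourierInv_const_mul,
    fourierInv_jump, mul_add, mul_assoc]

lemma fourierInv_steinSymbol [SFinite ν] (hν : Integrable (fun u ↦ u ^ 2) ν) (f : 𝓢(ℝ, ℂ))
    (x : ℝ) :
    𝓕⁻ (steinSymbol c ν f) x = -(2 * Real.pi * I) * steinOperator c ν (𝓕⁻ (f : ℝ → ℂ)) x := by
  have hderiv : Integrable (deriv f) := (SchwartzMap.derivCLM ℝ ℂ f).integrable
  unfold steinSymbol
  rw [fourierInv_fun_add hderiv ((integrable_levyExponentDeriv_mul hν f).const_mul _),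
    fourierInv_deriv, fourierInv_const_mul, fourierInv_levyExponentDeriv_mul hν, steinOperator,
    real_smul]
  push_cast
  ring

end SteinOperator

section SteinIdentity

variable {E : Type*} [NormedAddCommGroup E] [NormedSpace ℝ E] {c K : ℝ} {B : ℝ≥0}
  {μ ν ρ : Measure ℝ} {g : ℝ → E} {s : Set ℝ}

lemma norm_integral_steinOperator_fourierInv_le [IsProbabilityMeasure μ] [SFinite ν]
    [IsFiniteMeasure ρ] (hν : Integrable (fun u ↦ u ^ 2) ν)
    (hμ : ∀ t, charFun μ t = cexp (levyExponent c ν t + poissonExponent ρ t))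
    (f : 𝓢(ℝ, ℂ)) (hK : ∀ x, ‖steinOperator c ν (𝓕⁻ (f : ℝ → ℂ)) x‖ ≤ K) :
    ‖∫ x, steinOperator c ν (𝓕⁻ (f : ℝ → ℂ)) x ∂μ‖ ≤ (Real.exp (2 * ρ.real univ) - 1) * K := by
  set S : ℝ → ℂ := steinSymbol c ν f
  set η : ℝ → ℂ := fun t ↦ poissonExponent ρ (2 * Real.pi * t)
  have hS : Integrable S := integrable_steinSymbol hν f
  have hηS : Integrable fun t ↦ (cexp (-η t) - 1) * S t :=
    integrable_cexp_neg_poissonExponent_sub_one_mul hS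
  have integral_fourierInv_S :
      ∫ x, 𝓕⁻ S x ∂μ = -∫ x, 𝓕⁻ (fun t ↦ (cexp (-η t) - 1) * S t) x ∂μ := by
    rw [← integral_charFun_mul_eq_integral_fourierInv hS,
      ← integral_charFun_mul_eq_integral_fourierInv hηS, eq_neg_iff_add_eq_zero,
      ← integral_add (integrable_charFun_mul hS) (integrable_charFun_mul hηS),
      ← integral_steinSymbol_mul_cexp_levyExponent (c := c) hν f]
    congr with t
    rw [← mul_add, ← one_add_mul, add_sub_cancel, ← mul_assoc, hμ, ← Complex.exp_add,
      add_neg_cancel_right, mul_comm]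
  have norm_two_pi_I : ‖-(2 * Real.pi * I)‖ = 2 * Real.pi := by
    simp [abs_of_pos Real.pi_pos]
  have norm_fourierInv_S_le (x : ℝ) : ‖𝓕⁻ S x‖ ≤ 2 * Real.pi * K := by
    rw [fourierInv_steinSymbol hν, norm_mul, norm_two_pi_I]
    gcongr
    exact hK x
  have key : ‖∫ x, 𝓕⁻ S x ∂μ‖ ≤ (Real.exp (2 * ρ.real univ) - 1) * (2 * Real.pi * K) := by
    rw [integral_fourierInv_S, norm_neg]
    simpa using norm_integral_le_of_norm_le_const (μ := μ) (.of_forall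
      (norm_fourierInv_exp_neg_poissonExponent_sub_one_mul_le hS norm_fourierInv_S_le))
  simp_rw [S, fourierInv_steinSymbol hν, integral_const_mul, norm_mul, norm_two_pi_I,
    mul_left_comm _ (2 * Real.pi)] at key
  exact le_of_mul_le_mul_left key Real.two_pi_pos

lemma isFiniteMeasure_restrict_compl (hν : Integrable (fun u ↦ min 1 (u ^ 2)) ν)
    (hs : Metric.closedBall 0 1 ⊆ s) : IsFiniteMeasure (ν.restrict sᶜ) := by
  rw [isFiniteMeasure_restrict]
  refine ((measure_mono fun u hu ↦ ?_).trans_lt (hν.measure_norm_ge_lt_top one_pos)).ne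
  have one_lt : 1 < |u| := by simpa using fun h ↦ hu (hs h)
  have one_le_sq : 1 ≤ u ^ 2 := (one_le_sq_iff_one_le_abs u).2 one_lt.le
  simp [min_eq_left one_le_sq]

lemma levyExponent_eq_restrict_add_poissonExponent (hν : Integrable (fun u ↦ min 1 (u ^ 2)) ν)
    (hs : MeasurableSet s) (hsub : Metric.closedBall 0 1 ⊆ s) (t : ℝ) :
    levyExponent c ν t = levyExponent c (ν.restrict s) t + poissonExponent (ν.restrict sᶜ) t := by
  have := isFiniteMeasure_restrict_compl hν hsub
  have large_jumps : ∫ u in sᶜ, levyKernel t u ∂ν = poissonExponent (ν.restrict sᶜ) t := by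
    have hint : Integrable (fun u : ℝ ↦ cexp (I * t * u)) (ν.restrict sᶜ) :=
      .of_bound (by fun_prop) 1 (.of_forall fun u ↦ (norm_cexp_I_mul_mul t u).le)
    rw [poissonExponent, charFun_real_eq_integral_cexp]
    calc ∫ u in sᶜ, levyKernel t u ∂ν = ∫ u in sᶜ, (cexp (I * t * u) - 1) ∂ν := by
          refine setIntegral_congr_fun hs.compl fun u hu ↦ ?_
          have hu1 : ¬|u| ≤ 1 := by simpa using fun h ↦ hu (hsub h)
          simp [levyKernel, hu1]
      _ = (∫ u in sᶜ, cexp (I * t * u) ∂ν) - (ν.restrict sᶜ).real univ := by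
          rw [integral_sub hint (integrable_const 1), integral_const]
          simp
  rw [levyExponent, levyExponent, ← integral_add_compl hs (integrable_levyKernel hν t),
    large_jumps, add_assoc]

lemma integrable_sq_restrict_closedBall (hν : Integrable (fun u ↦ min 1 (u ^ 2)) ν) {r : ℝ}
    (hr : 1 ≤ r) : Integrable (fun u ↦ u ^ 2) (ν.restrict (Metric.closedBall 0 r)) := by
  refine (hν.restrict.const_mul (r ^ 2)).mono' (by fun_prop) ?_
  filter_upwards [ae_restrict_mem Metric.isClosed_closedBall.measurableSet] with u hu
  have hur : |u| ≤ r := by simpa using hu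
  rw [Real.norm_of_nonneg (sq_nonneg u)]
  rcases le_total 1 (u ^ 2) with h | h
  · rw [min_eq_left h, mul_one, ← sq_abs]
    gcongr
  · rw [min_eq_right h]
    exact le_mul_of_one_le_left (sq_nonneg u) (one_le_pow₀ hr)

lemma monotone_closedBall_nat_add_one : Monotone fun n : ℕ ↦ Metric.closedBall (0 : ℝ) (n + 1) :=
  fun m n hmn ↦ Metric.closedBall_subset_closedBall (by gcongr)

lemma iUnion_closedBall_nat_add_one : ⋃ n : ℕ, Metric.closedBall (0 : ℝ) (n + 1) = univ :=
  iUnion_eq_univ_iff.2 fun u ↦ (exists_nat_ge |u|).imp fun n hn ↦ by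
    simpa using hn.trans (lt_add_one _).le

lemma tendsto_real_restrict_compl_closedBall (hν : Integrable (fun u ↦ min 1 (u ^ 2)) ν) :
    Tendsto (fun n : ℕ ↦ (ν.restrict (Metric.closedBall 0 (n + 1))ᶜ).real univ) atTop (𝓝 0) := by
  have finite_compl : ν (Metric.closedBall 0 ((0 : ℕ) + 1))ᶜ ≠ ∞ :=
    isFiniteMeasure_restrict.1 <| isFiniteMeasure_restrict_compl hν (by simp)
  have h := tendsto_measure_iInter_atTop (μ := ν)
    (fun n ↦ Metric.isClosed_closedBall.measurableSet.compl.nullMeasurableSet)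
    (fun m n hmn ↦ compl_subset_compl.2 (monotone_closedBall_nat_add_one hmn)) ⟨0, finite_compl⟩
  rw [← compl_iUnion, iUnion_closedBall_nat_add_one, compl_univ, measure_empty] at h
  simpa [measureReal_def, Function.comp_def] using
    (ENNReal.tendsto_toReal ENNReal.zero_ne_top).comp h

lemma stronglyMeasurable_uncurry_steinJump (hg : Continuous g) :
    StronglyMeasurable (Function.uncurry (steinJump g)) :=
  (by fun_prop : Continuous fun p : ℝ × ℝ ↦ p.2).stronglyMeasurable.smul <|
    (by fun_prop : Continuous fun p : ℝ × ℝ ↦ g (p.1 + p.2)).stronglyMeasurable.sub <|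
      StronglyMeasurable.ite (measurableSet_le (by fun_prop) measurable_const)
        (by fun_prop : Continuous fun p : ℝ × ℝ ↦ g p.1).stronglyMeasurable
        stronglyMeasurable_const

lemma integrable_steinJump (hg : Continuous g) (hB : ∀ x, ∫⁻ u, ‖steinJump g x u‖ₑ ∂ν ≤ B)
    (x : ℝ) : Integrable (steinJump g x) ν :=
  ⟨((stronglyMeasurable_uncurry_steinJump hg).comp_measurable
    measurable_prodMk_left).aestronglyMeasurable, (hB x).trans_lt ENNReal.coe_lt_top⟩

lemma norm_integral_steinJump_le (hB : ∀ x, ∫⁻ u, ‖steinJump g x u‖ₑ ∂ν ≤ B) (x : ℝ) :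
    ‖∫ u, steinJump g x u ∂ν‖ ≤ B := by
  have h := (enorm_integral_le_lintegral_enorm (μ := ν) (steinJump g x)).trans (hB x)
  exact_mod_cast h

lemma stronglyMeasurable_integral_steinJump [SFinite ν] (hg : Continuous g) :
    StronglyMeasurable fun x ↦ ∫ u, steinJump g x u ∂ν :=
  (stronglyMeasurable_uncurry_steinJump hg).integral_prod_right

lemma integrable_integral_steinJump [IsFiniteMeasure μ] [SFinite ν] (hg : Continuous g)
    (hB : ∀ x, ∫⁻ u, ‖steinJump g x u‖ₑ ∂ν ≤ B) :
    Integrable (fun x ↦ ∫ u, steinJump g x u ∂ν) μ :=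
  .of_bound (stronglyMeasurable_integral_steinJump hg).aestronglyMeasurable B
    (.of_forall (norm_integral_steinJump_le hB))

lemma exists_norm_sub_smul_le (c : ℝ) (f : 𝓢(ℝ, E)) : ∃ K, ∀ x, ‖(x - c) • f x‖ ≤ K := by
  have hgrowth : (fun x : ℝ ↦ x - c).HasTemperateGrowth := by fun_prop
  simp_rw [← SchwartzMap.smulLeftCLM_apply_apply hgrowth]
  exact ⟨_, SchwartzMap.norm_le_seminorm ℝ _⟩

lemma integrable_sub_smul [IsFiniteMeasure μ] (c : ℝ) (f : 𝓢(ℝ, E)) :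
    Integrable (fun x ↦ (x - c) • f x) μ := by
  obtain ⟨K, hK⟩ := exists_norm_sub_smul_le c f
  exact .of_bound (((continuous_sub_right c)).smul f.continuous).aestronglyMeasurable K
    (.of_forall hK)

lemma norm_steinOperator_le (hK : ∀ x, ‖(x - c) • g x‖ ≤ K)
    (hB : ∀ x, ∫⁻ u, ‖steinJump g x u‖ₑ ∂ν ≤ B) (x : ℝ) : ‖steinOperator c ν g x‖ ≤ K + B :=
  (norm_sub_le _ _).trans (add_le_add (hK x) (norm_integral_steinJump_le hB x))

lemma tendsto_steinOperator_restrict_closedBall (hg : Continuous g)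
    (hB : ∀ x, ∫⁻ u, ‖steinJump g x u‖ₑ ∂ν ≤ B) (x : ℝ) :
    Tendsto (fun n : ℕ ↦ steinOperator c (ν.restrict (Metric.closedBall 0 (n + 1))) g x) atTop
      (𝓝 (steinOperator c ν g x)) := by
  have h := tendsto_setIntegral_of_monotone (μ := ν)
    (fun n : ℕ ↦ Metric.isClosed_closedBall.measurableSet) monotone_closedBall_nat_add_one
    (integrable_steinJump hg hB x).integrableOn
  rw [iUnion_closedBall_nat_add_one, setIntegral_univ] at h
  exact h.const_sub _

lemma norm_integral_steinOperator_restrict_le [IsProbabilityMeasure μ] [SFinite ν]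
    (hν : Integrable (fun u ↦ min 1 (u ^ 2)) ν)
    (hμ : ∀ t, charFun μ t = cexp (levyExponent c ν t)) (g : 𝓢(ℝ, ℂ)) {r : ℝ} (hr : 1 ≤ r)
    (hK : ∀ x, ‖steinOperator c (ν.restrict (Metric.closedBall 0 r)) g x‖ ≤ K) :
    ‖∫ x, steinOperator c (ν.restrict (Metric.closedBall 0 r)) g x ∂μ‖
      ≤ (Real.exp (2 * (ν.restrict (Metric.closedBall 0 r)ᶜ).real univ) - 1) * K := by
  have hsub : Metric.closedBall (0 : ℝ) 1 ⊆ Metric.closedBall 0 r :=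
    Metric.closedBall_subset_closedBall hr
  have := isFiniteMeasure_restrict_compl hν hsub
  have fourierInv_fourier : 𝓕⁻ ((𝓕 g : 𝓢(ℝ, ℂ)) : ℝ → ℂ) = g := by
    rw [← SchwartzMap.fourierInv_coe, FourierTransform.fourierInv_fourier_eq]
  rw [← fourierInv_fourier] at hK ⊢
  refine norm_integral_steinOperator_fourierInv_le (integrable_sq_restrict_closedBall hν hr)
    (fun t ↦ ?_) (𝓕 g) hK
  rw [hμ, levyExponent_eq_restrict_add_poissonExponent hν
    Metric.isClosed_closedBall.measurableSet hsub]

lemma integral_steinOperator_eq_zero [IsProbabilityMeasure μ] [SFinite ν]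
    (hν : Integrable (fun u ↦ min 1 (u ^ 2)) ν)
    (hμ : ∀ t, charFun μ t = cexp (levyExponent c ν t)) (g : 𝓢(ℝ, ℂ))
    (hB : ∀ x, ∫⁻ u, ‖steinJump g x u‖ₑ ∂ν ≤ B) : ∫ x, steinOperator c ν g x ∂μ = 0 := by
  obtain ⟨K, hK⟩ := exists_norm_sub_smul_le c g
  have hB_restrict (s : Set ℝ) (x : ℝ) : ∫⁻ u, ‖steinJump g x u‖ₑ ∂(ν.restrict s) ≤ B :=
    (setLIntegral_le_lintegral _ _).trans (hB x)
  have norm_le (n : ℕ) := norm_steinOperator_le hK (hB_restrict (Metric.closedBall 0 (n + 1)))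
  have tendsto_bound : Tendsto (fun n : ℕ ↦
      (Real.exp (2 * (ν.restrict (Metric.closedBall 0 (n + 1))ᶜ).real univ) - 1) * (K + B))
      atTop (𝓝 0) := by
    simpa using
      (((tendsto_real_restrict_compl_closedBall hν).const_mul 2).rexp.sub_const 1).mul_const (K + B)
  refine tendsto_nhds_unique ?_ (squeeze_zero_norm (fun n ↦
    norm_integral_steinOperator_restrict_le hν hμ g (by simp) (norm_le n)) tendsto_bound)
  refine tendsto_integral_of_dominated_convergence (fun _ ↦ K + B) (fun n ↦ ?_)
    (integrable_const _) (fun n ↦ .of_forall (norm_le n))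
    (.of_forall (tendsto_steinOperator_restrict_closedBall g.continuous hB))
  exact ((integrable_sub_smul c g).sub
    (integrable_integral_steinJump g.continuous (hB_restrict _))).aestronglyMeasurable

lemma steinJump_ofReal (g : ℝ → ℝ) (x u : ℝ) :
    steinJump (fun y ↦ (g y : ℂ)) x u = steinJump g x u := by
  simp only [steinJump, real_smul, smul_eq_mul]
  split_ifs <;> push_cast <;> rfl

lemma steinOperator_ofReal (g : ℝ → ℝ) (x : ℝ) :
    steinOperator c ν (fun y ↦ (g y : ℂ)) x = steinOperator c ν g x := by
  simp only [steinOperator, steinJump_ofReal, integral_complex_ofReal, real_smul, smul_eq_mul]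
  push_cast
  rfl

theorem integral_sub_mul_eq_integral_integral_steinJump [IsProbabilityMeasure μ] [SFinite ν]
    (hν : Integrable (fun u ↦ min 1 (u ^ 2)) ν)
    (hμ : ∀ t, charFun μ t = cexp (levyExponent c ν t)) (g : 𝓢(ℝ, ℝ))
    (hB : ∀ x, ∫⁻ u, ‖steinJump g x u‖ₑ ∂ν ≤ B) :
    ∫ x, (x - c) * g x ∂μ = ∫ x, ∫ u, steinJump g x u ∂ν ∂μ := by
  have hB_complex (x : ℝ) : ∫⁻ u, ‖steinJump (fun y ↦ (g y : ℂ)) x u‖ₑ ∂ν ≤ B := by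
    simp_rw [steinJump_ofReal]
    simpa only [enorm_eq_nnnorm, nnnorm_real] using hB x
  have integral_eq_zero : ∫ x, ((steinOperator c ν g x : ℝ) : ℂ) ∂μ = 0 := by
    simp_rw [← steinOperator_ofReal]
    exact integral_steinOperator_eq_zero hν hμ (SchwartzMap.postcompCLM ofRealCLM g) hB_complex
  rw [← sub_eq_zero, ← ofReal_eq_zero, ← integral_eq_zero, integral_complex_ofReal, ofReal_inj]
  exact (integral_sub (integrable_sub_smul c g)
    (integrable_integral_steinJump g.continuous hB)).symm

end SteinIdentity

section StableLaw

variable {α m₁ m₂ : ℝ}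

lemma lintegral_nuStable_le (hm₁ : 0 ≤ m₁) (hm₂ : 0 ≤ m₂) (F : ℝ → ℝ≥0∞) :
    ∫⁻ u, F u ∂(nuStable α m₁ m₂)
      ≤ ENNReal.ofReal (m₁ + m₂) * ∫⁻ u, ENNReal.ofReal (|u| ^ (-α - 1)) * F u := by
  have density_le (u : ℝ) :
      (if 0 < u then m₁ * u ^ (-α - 1) else if u < 0 then m₂ * |u| ^ (-α - 1) else 0)
        ≤ (m₁ + m₂) * |u| ^ (-α - 1) := by
    have h : 0 ≤ |u| ^ (-α - 1) := by positivity
    split_ifs with hu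
    · rw [abs_of_pos hu] at h ⊢
      nlinarith
    all_goals nlinarith
  refine (lintegral_withDensity_le_lintegral_mul _ ?_ F).trans ?_
  · exact (Measurable.ite measurableSet_Ioi (by fun_prop)
      (Measurable.ite measurableSet_Iio (by fun_prop) measurable_const)).ennreal_ofReal
  · rw [← lintegral_const_mul' _ _ ENNReal.ofReal_ne_top]
    refine lintegral_mono fun u ↦ ?_
    rw [← mul_assoc, ← ENNReal.ofReal_mul (by positivity)]
    exact mul_le_mul_left (ENNReal.ofReal_le_ofReal (density_le u)) _

lemma integrable_abs_rpow_mul_min_one_sq (hα : 0 < α) (hα2 : α < 2) :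
    Integrable fun u : ℝ ↦ |u| ^ (-α - 1) * min 1 (u ^ 2) := by
  have integrableOn_Ioc :
      IntegrableOn (fun u : ℝ ↦ u ^ (-α - 1) * min 1 (u ^ 2)) (Ioc 0 1) := by
    have h : IntegrableOn (fun u : ℝ ↦ u ^ (1 - α)) (Ioc 0 1) :=
      (intervalIntegrable_iff_integrableOn_Ioc_of_le zero_le_one).1
        (intervalIntegral.intervalIntegrable_rpow' (by linarith))
    refine h.congr_fun (fun u hu ↦ ?_) measurableSet_Ioc
    beta_reduce
    rw [min_eq_right (pow_le_one₀ hu.1.le hu.2), ← Real.rpow_natCast u 2, ← Real.rpow_add hu.1]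
    congr 1
    push_cast
    ring
  have integrableOn_Ioi :
      IntegrableOn (fun u : ℝ ↦ u ^ (-α - 1) * min 1 (u ^ 2)) (Ioi 1) := by
    refine (integrableOn_Ioi_rpow_of_lt (by linarith : -α - 1 < -1) one_pos).congr_fun
      (fun u hu ↦ ?_) measurableSet_Ioi
    beta_reduce
    rw [min_eq_left (one_le_pow₀ (mem_Ioi.1 hu).le), mul_one]
  have h := integrable_fun_norm_addHaar (volume : Measure ℝ)
    (f := fun u : ℝ ↦ u ^ (-α - 1) * min 1 (u ^ 2))
  simp only [Real.norm_eq_abs, sq_abs, Module.finrank_self, tsub_self, pow_zero, one_smul] at h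
  rw [h, ← Ioc_union_Ioi_eq_Ioi zero_le_one]
  exact integrableOn_Ioc.union integrableOn_Ioi

lemma integrable_min_one_sq_nuStable (hα : 0 < α) (hα2 : α < 2) (hm₁ : 0 ≤ m₁) (hm₂ : 0 ≤ m₂) :
    Integrable (fun u ↦ min 1 (u ^ 2)) (nuStable α m₁ m₂) := by
  refine ⟨by fun_prop, (lintegral_nuStable_le hm₁ hm₂ _).trans_lt ?_⟩
  refine ENNReal.mul_lt_top ENNReal.ofReal_lt_top ?_
  refine lt_of_eq_of_lt (lintegral_congr fun u ↦ ?_) (integrable_abs_rpow_mul_min_one_sq hα hα2).2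
  rw [enorm_mul, Real.enorm_of_nonneg (by positivity : 0 ≤ |u| ^ (-α - 1))]

lemma abs_rpow_mul_norm_steinJump_le {E : Type*} [NormedAddCommGroup E] [NormedSpace ℝ E]
    {f : ℝ → E} {K : ℝ≥0} (hα : 0 ≤ α) (hf : LipschitzWith K f) (x u : ℝ) :
    |u| ^ (-α - 1) * ‖steinJump f x u‖
      ≤ K * (|u| ^ (-α - 1) * min 1 (u ^ 2)) + ‖f (x + u)‖ := by
  rw [steinJump, norm_smul, Real.norm_eq_abs]
  split_ifs with hu
  · have lipschitz : ‖f (x + u) - f x‖ ≤ K * |u| := by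
      simpa [dist_eq_norm] using hf.dist_le_mul (x + u) x
    rw [min_eq_right ((sq_le_one_iff_abs_le_one u).2 hu)]
    calc |u| ^ (-α - 1) * (|u| * ‖f (x + u) - f x‖)
        ≤ |u| ^ (-α - 1) * (|u| * (K * |u|)) := by gcongr
      _ = K * (|u| ^ (-α - 1) * u ^ 2) := by rw [← sq_abs u]; ring
      _ ≤ _ := le_add_of_nonneg_right (norm_nonneg _)
  · have hu' : 1 < |u| := not_le.1 hu
    have weight_le : |u| ^ (-α - 1) * |u| ≤ 1 := by
      rw [← Real.rpow_add_one (by positivity)]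
      exact Real.rpow_le_one_of_one_le_of_nonpos hu'.le (by linarith)
    rw [sub_zero, ← mul_assoc]
    exact (mul_le_of_le_one_left (norm_nonneg _) weight_le).trans
      (le_add_of_nonneg_left (by positivity))

lemma exists_lintegral_enorm_steinJump_nuStable_le {E : Type*} [NormedAddCommGroup E]
    [NormedSpace ℝ E] {f : ℝ → E} {K : ℝ≥0} (hα : 0 < α) (hα2 : α < 2) (hm₁ : 0 ≤ m₁)
    (hm₂ : 0 ≤ m₂) (hf : LipschitzWith K f) (hf_int : Integrable f) :
    ∃ B : ℝ≥0, ∀ x, ∫⁻ u, ‖steinJump f x u‖ₑ ∂(nuStable α m₁ m₂) ≤ B := by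
  set w : ℝ → ℝ := fun u ↦ K * (|u| ^ (-α - 1) * min 1 (u ^ 2))
  have hw : Integrable w := (integrable_abs_rpow_mul_min_one_sq hα hα2).const_mul _
  have steinJump_le (x u : ℝ) :
      ENNReal.ofReal (|u| ^ (-α - 1)) * ‖steinJump f x u‖ₑ ≤ ‖w u‖ₑ + ‖f (x + u)‖ₑ := by
    rw [← ofReal_norm, ← ENNReal.ofReal_mul (by positivity),
      Real.enorm_of_nonneg (by positivity : 0 ≤ w u), ← ofReal_norm,
      ← ENNReal.ofReal_add (by positivity) (norm_nonneg _)]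
    exact ENNReal.ofReal_le_ofReal (abs_rpow_mul_norm_steinJump_le hα.le hf x u)
  set B := ENNReal.ofReal (m₁ + m₂) * ((∫⁻ u, ‖w u‖ₑ) + ∫⁻ u, ‖f u‖ₑ)
  have hB : B ≠ ∞ :=
    ENNReal.mul_ne_top ENNReal.ofReal_ne_top (ENNReal.add_ne_top.2 ⟨hw.2.ne, hf_int.2.ne⟩)
  refine ⟨B.toNNReal, fun x ↦ ?_⟩
  rw [ENNReal.coe_toNNReal hB]
  refine (lintegral_nuStable_le hm₁ hm₂ _).trans (mul_le_mul_right ?_ _)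
  calc ∫⁻ u, ENNReal.ofReal (|u| ^ (-α - 1)) * ‖steinJump f x u‖ₑ
      ≤ ∫⁻ u, (‖w u‖ₑ + ‖f (x + u)‖ₑ) := lintegral_mono (steinJump_le x)
    _ = (∫⁻ u, ‖w u‖ₑ) + ∫⁻ u, ‖f (x + u)‖ₑ := lintegral_add_left' hw.1.enorm _
    _ = (∫⁻ u, ‖w u‖ₑ) + ∫⁻ u, ‖f u‖ₑ := by
      rw [lintegral_add_left_eq_self (fun u ↦ ‖f u‖ₑ) x]

lemma exists_lipschitzWith_schwartzMap {E : Type*} [NormedAddCommGroup E] [NormedSpace ℝ E]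
    (f : 𝓢(ℝ, E)) : ∃ K, LipschitzWith K f := by
  obtain ⟨C, hC, deriv_le⟩ := (SchwartzMap.derivCLM ℝ E f).decay 0 0
  refine ⟨⟨C, hC.le⟩, lipschitzWith_of_nnnorm_deriv_le f.differentiable fun x ↦ ?_⟩
  have deriv_x_le : ‖deriv f x‖ ≤ C := by simpa using deriv_le x
  exact deriv_x_le

end StableLaw

theorem stmt_8_general (α m₁ m₂ c : ℝ) (hα : 0 < α) (hα2 : α < 2)
    (hm₁ : 0 ≤ m₁) (hm₂ : 0 ≤ m₂)
    (μ : Measure ℝ) [IsProbabilityMeasure μ]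
    (hcf : ∀ t : ℝ, ∫ x : ℝ, Complex.exp (Complex.I * t * x) ∂μ =
      Complex.exp (Complex.I * t * c + ∫ u : ℝ, (Complex.exp (Complex.I * t * u) - 1 -
        (if |u| ≤ 1 then Complex.I * t * u else 0)) ∂(nuStable α m₁ m₂)))
    (g : SchwartzMap ℝ ℝ) :
    Integrable (fun x : ℝ => (x - c) * g x) μ ∧
    (∀ x : ℝ, Integrable (fun u : ℝ => u * (g (x + u) - (if |u| ≤ 1 then g x else 0)))
      (nuStable α m₁ m₂)) ∧
    Integrable (fun x : ℝ => ∫ u : ℝ, u * (g (x + u) - (if |u| ≤ 1 then g x else 0))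
      ∂(nuStable α m₁ m₂)) μ ∧
    ∫ x : ℝ, (x - c) * g x ∂μ =
      ∫ x : ℝ, ∫ u : ℝ, u * (g (x + u) - (if |u| ≤ 1 then g x else 0))
        ∂(nuStable α m₁ m₂) ∂μ := by
  have : SFinite (nuStable α m₁ m₂) := by unfold nuStable; infer_instance
  obtain ⟨K, hK⟩ := exists_lipschitzWith_schwartzMap g
  obtain ⟨B, hB⟩ :=
    exists_lintegral_enorm_steinJump_nuStable_le hα hα2 hm₁ hm₂ hK g.integrable
  have hμ (t : ℝ) : charFun μ t = cexp (levyExponent c (nuStable α m₁ m₂) t) :=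
    (charFun_real_eq_integral_cexp μ t).trans (hcf t)
  exact ⟨integrable_sub_smul c g, integrable_steinJump g.continuous hB,
    integrable_integral_steinJump g.continuous hB,
    integral_sub_mul_eq_integral_integral_steinJump
      (integrable_min_one_sq_nuStable hα hα2 hm₁ hm₂) hμ g hB⟩

theorem stmt_8 (α m₁ m₂ β : ℝ) (hα : 1 ≤ α) (hα2 : α < 2)
    (hm₁ : 0 ≤ m₁) (hm₂ : 0 ≤ m₂) (hm : 0 < m₁ + m₂)
    (μ : Measure ℝ) [IsProbabilityMeasure μ]
    (hcf : ∀ t : ℝ, ∫ x : ℝ, Complex.exp (Complex.I * t * x) ∂μ = psi12 α m₁ m₂ β t)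
    (g : SchwartzMap ℝ ℝ) :
    Integrable (fun x : ℝ => (x - Gamma12 α m₁ m₂ β) * g x) μ ∧
    (∀ x : ℝ, Integrable (fun u : ℝ => u * (g (x + u) - (if |u| ≤ 1 then g x else 0)))
      (nuStable α m₁ m₂)) ∧
    Integrable (fun x : ℝ => ∫ u : ℝ, u * (g (x + u) - (if |u| ≤ 1 then g x else 0))
      ∂(nuStable α m₁ m₂)) μ ∧
    ∫ x : ℝ, (x - Gamma12 α m₁ m₂ β) * g x ∂μ =
      ∫ x : ℝ, ∫ u : ℝ, u * (g (x + u) - (if |u| ≤ 1 then g x else 0))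
        ∂(nuStable α m₁ m₂) ∂μ := by
  exact stmt_8_general α m₁ m₂ _ (by linarith) hα2 hm₁ hm₂ μ hcf g
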